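/- arXiv:0708.3722 — 2 statements merged into one kernel-verified Lean document; each statement's English description precedes it below -/
import Mathlib

section
/- First reduction step with computed z is exact (Fmac_arg_reduct_correct3): Assume p > 3, x is a p-bit FPN, R is a positive normal p-bit FPN, C₁ is a round-to-nearest of 1/R to p − 2 bits, C₁ is not exactly a power of 2 (C₁ ≠ 2^j for every integer j), C₁ ≥ 2^(p+max(−1,N))·λ, 2^(−N) is a p-bit FPN, |x·R| ≤ 2^(p−N−2) − 2^(−N), z₀ is a round-to-nearest of 3·2^(p−N−2) + x·R to p bits, and z is a round-to-nearest of z₀ − 3·2^(p−N−2) to p bits. Then x − z·C₁ is a p-bit FPN. -/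
/-!
Adding `3 * 2 ^ (p - N - 2)` pushes `x * R` into a range where `p`-bit numbers are the multiples of
`2 ^ (-N)`, so `z = ℓ * 2 ^ (-N)` is a nearest such multiple and `|x * R - z| ≤ 2 ^ (-N) / 2`.
Put `y = 2 ^ (-N) * C₁` and `t = 2 ^ (-N) / R`. Then `|x - ℓ * t| ≤ t / 2`, and `|t - y|` is at
most half the spacing `2 ^ g` of the `(p - 2)`-bit numbers near `y`.

If `|x|` is at least `2 ^ (p - 3 + g)`, then `x` is a multiple of `2 ^ (g - 2)` (or of `2 ^ emin`,
if that is coarser), and the two saved bits of `C₁` absorb the error `|ℓ| * |t - y|`. For smaller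
`|x|` we use `2 ^ (p - 3 + g) ≤ t`, which holds because `C₁` is not a power of two: it forces
`|ℓ| ≤ 1`, and for `ℓ = ±1` the difference is exact by an argument in the style of Sterbenz.
-/

noncomputable section

/-- `x` is a `k`-bit (binary) floating-point number with minimal exponent `emin`:
there exist integers `m`, `e` with `|m| < 2^k`, `e ≥ emin` and `x = m·2^e`. -/
def IsFPN (emin k : ℤ) (x : ℝ) : Prop :=
  ∃ m e : ℤ, |(m : ℝ)| < (2 : ℝ) ^ k ∧ emin ≤ e ∧ x = (m : ℝ) * (2 : ℝ) ^ e

/-- `x` is a normal `p`-bit floating-point number: it admits a representation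
with `2^(p-1) ≤ |m| < 2^p`. -/
def IsNormalFPN (emin p : ℤ) (x : ℝ) : Prop :=
  ∃ m e : ℤ, (2 : ℝ) ^ (p - 1) ≤ |(m : ℝ)| ∧ |(m : ℝ)| < (2 : ℝ) ^ p ∧
    emin ≤ e ∧ x = (m : ℝ) * (2 : ℝ) ^ e

/-- `r` is a round-to-nearest of `a` to `k` bits (ties broken in any way). -/
def RN (emin k : ℤ) (a r : ℝ) : Prop :=
  IsFPN emin k r ∧ ∀ y : ℝ, IsFPN emin k y → |a - r| ≤ |a - y|

/-- Unit in the last place at precision `p`: `ulp(x) = 2^(⌊log₂|x|⌋ - p + 1)`. -/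
def ulp (p : ℤ) (x : ℝ) : ℝ := (2 : ℝ) ^ (Int.log 2 |x| - p + 1)

section DyadicGrid

/-- The integer multiples of `2 ^ f`: the fixed-point numbers with exponent `f`. A number is a
`k`-bit floating-point number iff it lies on such a grid, `f` being at least the minimal exponent,
and is less than `2 ^ (k + f)` in magnitude. -/
def dyadicGrid (f : ℤ) : AddSubgroup ℝ := AddSubgroup.zmultiples ((2 : ℝ) ^ f)

variable {e f : ℤ} {x y : ℝ}

theorem mem_dyadicGrid : x ∈ dyadicGrid f ↔ ∃ m : ℤ, x = m * (2 : ℝ) ^ f := by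
  simp only [dyadicGrid, AddSubgroup.mem_zmultiples_iff, zsmul_eq_mul, eq_comm]

theorem dyadicGrid_antitone : Antitone dyadicGrid := by
  intro e f hef
  obtain ⟨n, rfl⟩ := Int.le.dest hef
  refine AddSubgroup.zmultiples_le_of_mem (mem_dyadicGrid.2 ⟨2 ^ n, ?_⟩)
  rw [zpow_add₀ two_ne_zero, zpow_natCast, mul_comm]
  norm_cast

theorem zpow_mem_dyadicGrid (hef : e ≤ f) : (2 : ℝ) ^ f ∈ dyadicGrid e :=
  dyadicGrid_antitone hef (AddSubgroup.mem_zmultiples _)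

theorem zpow_mul_mem_dyadicGrid (hx : x ∈ dyadicGrid f) (e : ℤ) :
    (2 : ℝ) ^ e * x ∈ dyadicGrid (e + f) := by
  obtain ⟨m, rfl⟩ := mem_dyadicGrid.1 hx
  refine mem_dyadicGrid.2 ⟨m, ?_⟩
  rw [zpow_add₀ two_ne_zero]
  ring

theorem add_zpow_le_of_mem_dyadicGrid (hx : x ∈ dyadicGrid f) (hy : y ∈ dyadicGrid f)
    (hxy : x < y) : x + (2 : ℝ) ^ f ≤ y := by
  obtain ⟨m, hm⟩ := mem_dyadicGrid.1 (sub_mem hy hx)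
  have hpos : (0 : ℝ) < 2 ^ f := by positivity
  have hm_pos : 0 < (m : ℝ) := pos_of_mul_pos_left (hm ▸ sub_pos.2 hxy) hpos.le
  have hm_one : (1 : ℝ) ≤ m := by exact_mod_cast Int.cast_pos.1 hm_pos
  linarith [le_mul_of_one_le_left hpos.le hm_one]

theorem exists_mem_dyadicGrid_abs_sub_le (f : ℤ) (x : ℝ) :
    ∃ y ∈ dyadicGrid f, |x - y| ≤ (2 : ℝ) ^ f / 2 := by
  have hpos : (0 : ℝ) < 2 ^ f := by positivity
  refine ⟨round (x / 2 ^ f) * 2 ^ f, mem_dyadicGrid.2 ⟨_, rfl⟩, ?_⟩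
  calc |x - round (x / 2 ^ f) * 2 ^ f| = |x / 2 ^ f - round (x / 2 ^ f)| * 2 ^ f := by
        rw [← abs_of_pos hpos, ← abs_mul, abs_of_pos hpos, sub_mul, div_mul_cancel₀ _ hpos.ne']
    _ ≤ 1 / 2 * 2 ^ f := by gcongr; exact abs_sub_round _
    _ = 2 ^ f / 2 := by ring

end DyadicGrid

section FloatingPoint

variable {emin k f g n : ℤ} {x y : ℝ}

theorem isFPN_iff_mem_dyadicGrid :
    IsFPN emin k x ↔ ∃ e, emin ≤ e ∧ x ∈ dyadicGrid e ∧ |x| < (2 : ℝ) ^ (k + e) := by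
  have abs_lt_iff (m e : ℤ) : |(m : ℝ) * 2 ^ e| < (2 : ℝ) ^ (k + e) ↔ |(m : ℝ)| < 2 ^ k := by
    have hpos : (0 : ℝ) < 2 ^ e := by positivity
    rw [abs_mul, abs_of_pos hpos, zpow_add₀ two_ne_zero, mul_lt_mul_iff_left₀ hpos]
  constructor
  · rintro ⟨m, e, hm, he, rfl⟩
    exact ⟨e, he, mem_dyadicGrid.2 ⟨m, rfl⟩, (abs_lt_iff m e).2 hm⟩
  · rintro ⟨e, he, hx, hlt⟩
    obtain ⟨m, rfl⟩ := mem_dyadicGrid.1 hx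
    exact ⟨m, e, (abs_lt_iff m e).1 hlt, he, rfl⟩

theorem isFPN_zpow (hk : 1 ≤ k) (hn : emin ≤ n) : IsFPN emin k ((2 : ℝ) ^ n) := by
  refine isFPN_iff_mem_dyadicGrid.2 ⟨n, hn, zpow_mem_dyadicGrid le_rfl, ?_⟩
  rw [abs_of_pos (by positivity)]
  exact zpow_lt_zpow_right₀ one_lt_two (by omega)

theorem IsFPN.neg (hx : IsFPN emin k x) : IsFPN emin k (-x) := by
  obtain ⟨e, he, hgrid, hlt⟩ := isFPN_iff_mem_dyadicGrid.1 hx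
  exact isFPN_iff_mem_dyadicGrid.2 ⟨e, he, neg_mem hgrid, by rwa [abs_neg]⟩

theorem isFPN_of_abs_le (hk : 1 ≤ k) (hf : emin ≤ f) (hx : x ∈ dyadicGrid f)
    (hle : |x| ≤ (2 : ℝ) ^ (k + f)) : IsFPN emin k x := by
  rcases hle.lt_or_eq with hlt | heq
  · exact isFPN_iff_mem_dyadicGrid.2 ⟨f, hf, hx, hlt⟩
  have hpow : IsFPN emin k ((2 : ℝ) ^ (k + f)) := isFPN_zpow hk (by omega)
  rcases eq_or_eq_neg_of_abs_eq heq with rfl | rfl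
  exacts [hpow, hpow.neg]

theorem IsFPN.mem_dyadicGrid_emin (hx : IsFPN emin k x) : x ∈ dyadicGrid emin := by
  obtain ⟨e, he, hgrid, -⟩ := isFPN_iff_mem_dyadicGrid.1 hx
  exact dyadicGrid_antitone he hgrid

theorem IsFPN.le_of_zpow (h : IsFPN emin k ((2 : ℝ) ^ n)) : emin ≤ n := by
  have hle := add_zpow_le_of_mem_dyadicGrid (zero_mem _) h.mem_dyadicGrid_emin (by positivity)
  rw [zero_add] at hle
  exact (zpow_le_zpow_iff_right₀ one_lt_two).1 hle

theorem IsFPN.mem_dyadicGrid_of_le_abs (hx : IsFPN emin k x)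
    (hle : (2 : ℝ) ^ (k - 1 + f) ≤ |x|) : x ∈ dyadicGrid f := by
  obtain ⟨e, -, hgrid, hlt⟩ := isFPN_iff_mem_dyadicGrid.1 hx
  have hexp : k - 1 + f < k + e := (zpow_lt_zpow_iff_right₀ one_lt_two).1 (hle.trans_lt hlt)
  exact dyadicGrid_antitone (by omega) hgrid

theorem IsFPN.exists_binade (hx : IsFPN emin k x) (hx_pos : 0 < x) :
    ∃ e, x ∈ dyadicGrid e ∧ (2 : ℝ) ^ (k - 1 + e) ≤ x ∧ x < (2 : ℝ) ^ (k + e) := by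
  obtain ⟨n, hlow, hhigh⟩ := exists_mem_Ico_zpow hx_pos (one_lt_two (α := ℝ))
  obtain ⟨e, rfl⟩ : ∃ e, n = k - 1 + e := ⟨n - (k - 1), by ring⟩
  exact ⟨e, hx.mem_dyadicGrid_of_le_abs (hlow.trans (le_abs_self x)), hlow,
    by rwa [show k + e = k - 1 + e + 1 by ring]⟩

theorem IsFPN.sub_of_mem_dyadicGrid (hx : IsFPN emin k x) (hg : emin ≤ g) (hfg : f ≤ g)
    (hy : y ∈ dyadicGrid g) (hle : (2 : ℝ) ^ (k - 1 + f) ≤ |x|)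
    (hlt : |x - y| < (2 : ℝ) ^ (k + f)) : IsFPN emin k (x - y) := by
  have hx_grid : x ∈ dyadicGrid (max f emin) := by
    rcases max_choice f emin with h | h <;> rw [h]
    exacts [hx.mem_dyadicGrid_of_le_abs hle, hx.mem_dyadicGrid_emin]
  refine isFPN_iff_mem_dyadicGrid.2 ⟨max f emin, le_max_right _ _,
    sub_mem hx_grid (dyadicGrid_antitone (max_le hfg hg) hy), hlt.trans_le ?_⟩
  exact zpow_le_zpow_right₀ one_le_two (by omega)

end FloatingPoint

section Rounding

variable {emin k f : ℤ} {a r y : ℝ}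

theorem RN.le_isFPN (hr : RN emin k a r) (hy : IsFPN emin k y) (hay : a ≤ y) : r ≤ y := by
  have h := hr.2 y hy
  rw [abs_of_nonpos (sub_nonpos.2 hay)] at h
  linarith [neg_abs_le (a - r)]

theorem RN.isFPN_le (hr : RN emin k a r) (hy : IsFPN emin k y) (hya : y ≤ a) : y ≤ r := by
  have h := hr.2 y hy
  rw [abs_of_nonneg (sub_nonneg.2 hya)] at h
  linarith [le_abs_self (a - r)]

theorem RN.eq_of_isFPN (hr : RN emin k a r) (ha : IsFPN emin k a) : r = a :=
  le_antisymm (hr.le_isFPN ha le_rfl) (hr.isFPN_le ha le_rfl)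

theorem RN.abs_sub_le_half_zpow (hr : RN emin k a r) (hk : 1 ≤ k) (hf : emin ≤ f)
    (ha : |a| ≤ (2 : ℝ) ^ (k + f)) : |a - r| ≤ (2 : ℝ) ^ f / 2 := by
  obtain ⟨y, hy, hay⟩ := exists_mem_dyadicGrid_abs_sub_le f a
  refine (hr.2 y (isFPN_of_abs_le hk hf hy ?_)).trans hay
  by_contra! hlt
  have hy_abs : |y| ∈ dyadicGrid f := by
    rcases abs_choice y with h | h <;> rw [h]
    exacts [hy, neg_mem hy]
  have hgap := add_zpow_le_of_mem_dyadicGrid (zpow_mem_dyadicGrid (by omega)) hy_abs hlt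
  linarith [abs_sub_abs_le_abs_sub y a, abs_sub_comm y a]

theorem RN.abs_sub_le_half_zpow_of_abs_lt (hr : RN emin k a r) (hk : 1 ≤ k) (hf : emin ≤ f)
    (hlt : |r| < (2 : ℝ) ^ (k + f)) : |a - r| ≤ (2 : ℝ) ^ f / 2 := by
  have hpow : IsFPN emin k ((2 : ℝ) ^ (k + f)) := isFPN_zpow hk (by omega)
  obtain ⟨hlow, hhigh⟩ := abs_lt.1 hlt
  refine hr.abs_sub_le_half_zpow hk hf (abs_le.2 ⟨?_, ?_⟩)
  · exact le_of_not_gt fun h ↦ hlow.not_ge (hr.le_isFPN hpow.neg h.le)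
  · exact le_of_not_gt fun h ↦ hhigh.not_ge (hr.isFPN_le hpow h.le)

theorem RN.exists_int_of_shift {p N : ℤ} {z₀ z : ℝ} (hp : 2 ≤ p) (hN : emin ≤ -N)
    (ha : |a| ≤ (2 : ℝ) ^ (p - N - 2))
    (hz₀ : RN emin p (3 * (2 : ℝ) ^ (p - N - 2) + a) z₀)
    (hz : RN emin p (z₀ - 3 * (2 : ℝ) ^ (p - N - 2)) z) :
    ∃ ℓ : ℤ, z = ℓ * (2 : ℝ) ^ (-N) ∧ |(ℓ : ℝ)| ≤ (2 : ℝ) ^ (p - 2) ∧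
      |a - z| ≤ (2 : ℝ) ^ (-N) / 2 := by
  have hlow : (2 : ℝ) ^ (p - 1 + -N) = 2 * 2 ^ (p - N - 2) := by
    rw [← zpow_one_add₀ two_ne_zero]; ring_nf
  have hhigh : (2 : ℝ) ^ (p + -N) = 4 * 2 ^ (p - N - 2) := by
    rw [show p + -N = 2 + (p - N - 2) by ring, zpow_add₀ two_ne_zero]; norm_num
  have hB : (0 : ℝ) < 2 ^ (p - N - 2) := by positivity
  obtain ⟨ha_low, ha_high⟩ := abs_le.1 ha
  have hz₀_low : (2 : ℝ) ^ (p - 1 + -N) ≤ z₀ :=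
    hz₀.isFPN_le (isFPN_zpow (by omega) (by omega)) (by linarith)
  have hz₀_high : z₀ ≤ (2 : ℝ) ^ (p + -N) :=
    hz₀.le_isFPN (isFPN_zpow (by omega) (by omega)) (by linarith)
  have hz₀_err := hz₀.abs_sub_le_half_zpow (by omega) hN
    (abs_le.2 ⟨by linarith, by linarith⟩)
  have hgrid : z₀ - 3 * (2 : ℝ) ^ (p - N - 2) ∈ dyadicGrid (-N) := by
    refine sub_mem (hz₀.1.mem_dyadicGrid_of_le_abs (hz₀_low.trans (le_abs_self z₀))) ?_
    simpa using zsmul_mem (zpow_mem_dyadicGrid (by omega : -N ≤ p - N - 2)) 3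
  have hle : |z₀ - 3 * (2 : ℝ) ^ (p - N - 2)| ≤ 2 ^ (p - N - 2) :=
    abs_le.2 ⟨by linarith, by linarith⟩
  obtain rfl : z = z₀ - 3 * (2 : ℝ) ^ (p - N - 2) :=
    hz.eq_of_isFPN (isFPN_of_abs_le (by omega) hN hgrid (by linarith))
  obtain ⟨ℓ, hℓ⟩ := mem_dyadicGrid.1 hgrid
  refine ⟨ℓ, hℓ, ?_, by convert hz₀_err using 2; ring⟩
  have hu : (0 : ℝ) < 2 ^ (-N) := by positivity
  rw [hℓ, abs_mul, abs_of_pos hu, show p - N - 2 = p - 2 + -N by ring,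
    zpow_add₀ two_ne_zero] at hle
  exact le_of_mul_le_mul_right hle hu

end Rounding

section Reduction

variable {emin p g ℓ : ℤ} {x y t : ℝ}

theorem IsFPN.sub_mul_of_large (hx : IsFPN emin p x) (hg : emin ≤ g) (hy : y ∈ dyadicGrid g)
    (hy_gap : y + (2 : ℝ) ^ g ≤ 2 ^ (p - 2 + g)) (hty : |t - y| ≤ (2 : ℝ) ^ g / 2)
    (hℓ : |(ℓ : ℝ)| ≤ (2 : ℝ) ^ (p - 2)) (hxt : |x - ℓ * t| ≤ t / 2)
    (hx_large : (2 : ℝ) ^ (p - 3 + g) ≤ |x|) : IsFPN emin p (x - ℓ * y) := by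
  refine hx.sub_of_mem_dyadicGrid (f := g - 2) hg (by omega) ?_ ?_ ?_
  · simpa using zsmul_mem hy ℓ
  · convert hx_large using 2; ring
  · have herr : |ℓ * (t - y)| ≤ (2 : ℝ) ^ (p - 2 + g) / 2 := by
      rw [abs_mul, zpow_add₀ two_ne_zero, mul_div_assoc]
      gcongr
    have hpow : (2 : ℝ) ^ (p + (g - 2)) = 2 ^ (p - 2 + g) := by ring_nf
    have hg_pos : (0 : ℝ) < 2 ^ g := by positivity
    calc |x - ℓ * y| = |(x - ℓ * t) + ℓ * (t - y)| := by ring_nf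
      _ ≤ |x - ℓ * t| + |ℓ * (t - y)| := abs_add_le _ _
      _ < 2 ^ (p + (g - 2)) := by linarith [(abs_le.1 hty).2]

theorem IsFPN.sub_of_half_le (hx : IsFPN emin p x) (hg : emin ≤ g) (hy : y ∈ dyadicGrid g)
    (hy_gap : y + (2 : ℝ) ^ g ≤ 2 ^ (p - 2 + g)) (hty : |t - y| ≤ (2 : ℝ) ^ g / 2)
    (ht_low : (2 : ℝ) ^ (p - 3 + g) ≤ t) (htx : t / 2 ≤ x) (hxy : x ≤ y) :
    IsFPN emin p (x - y) := by
  have hpow_half : (2 : ℝ) ^ (p - 3 + g) = 2 * 2 ^ (p - 1 + (g - 3)) := by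
    rw [← zpow_one_add₀ two_ne_zero]; ring_nf
  have hpow_double : (2 : ℝ) ^ (p - 2 + g) = 2 * 2 ^ (p + (g - 3)) := by
    rw [← zpow_one_add₀ two_ne_zero]; ring_nf
  have hg_pos : (0 : ℝ) < 2 ^ g := by positivity
  refine hx.sub_of_mem_dyadicGrid (f := g - 3) hg (by omega) hy ?_ ?_
  · linarith [le_abs_self x]
  · rw [abs_of_nonpos (sub_nonpos.2 hxy)]
    linarith [(abs_le.1 hty).1]

theorem IsFPN.sub_mul_of_close (hp : 3 ≤ p) (hx : IsFPN emin p x) (hg : emin ≤ g)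
    (hy : y ∈ dyadicGrid g) (hy_low : (2 : ℝ) ^ (p - 3 + g) < y)
    (hy_high : y < (2 : ℝ) ^ (p - 2 + g)) (hty : |t - y| ≤ (2 : ℝ) ^ g / 2)
    (hℓ : |(ℓ : ℝ)| ≤ (2 : ℝ) ^ (p - 2)) (hxt : |x - ℓ * t| ≤ t / 2) :
    IsFPN emin p (x - ℓ * y) := by
  have hy_gap_low := add_zpow_le_of_mem_dyadicGrid (zpow_mem_dyadicGrid (by omega)) hy hy_low
  have hy_gap := add_zpow_le_of_mem_dyadicGrid hy (zpow_mem_dyadicGrid (by omega)) hy_high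
  rcases le_or_gt ((2 : ℝ) ^ (p - 3 + g)) |x| with hx_large | hx_small
  · exact hx.sub_mul_of_large hg hy hy_gap hty hℓ hxt hx_large
  have ht_low : (2 : ℝ) ^ (p - 3 + g) ≤ t := by linarith [(abs_le.1 hty).1]
  have ht_pos : 0 < t := lt_of_lt_of_le (by positivity) ht_low
  have hℓ_small : |ℓ| < 2 := by
    have hmul : |(ℓ : ℝ)| * t < 2 * t := by
      rw [← abs_of_pos ht_pos, ← abs_mul, abs_of_pos ht_pos]
      linarith [abs_sub_abs_le_abs_sub (ℓ * t) x, abs_sub_comm x (ℓ * t)]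
    exact_mod_cast lt_of_mul_lt_mul_right hmul ht_pos.le
  have hx_lt := abs_lt.1 hx_small
  have hxt_le := abs_le.1 hxt
  obtain rfl | rfl | rfl : ℓ = 0 ∨ ℓ = 1 ∨ ℓ = -1 := by rw [abs_lt] at hℓ_small; omega
  · simpa using hx
  · rw [Int.cast_one, one_mul] at hxt_le ⊢
    exact hx.sub_of_half_le hg hy hy_gap hty ht_low (by linarith) (by linarith)
  · rw [Int.cast_neg, Int.cast_one, neg_one_mul] at hxt_le ⊢
    have hneg := hx.neg.sub_of_half_le hg hy hy_gap hty ht_low (by linarith) (by linarith)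
    convert hneg.neg using 1
    ring

end Reduction

/-- The lower bound on `C₁` says that both `C₁` and `2 ^ (-N) * C₁` are at least
`2 ^ (p - 3 + emin)`, the least positive normal number of precision `p - 2`. -/
theorem Fmac_arg_reduct_correct3_general (p emin N : ℤ) (hp : 3 < p)
    (x R C₁ z₀ z : ℝ)
    (hx : IsFPN emin p x)
    (hRpos : 0 < R)
    (hC₁ : RN emin (p - 2) (1 / R) C₁)
    (hC₁pow : ∀ j : ℤ, C₁ ≠ (2 : ℝ) ^ j)
    (hC₁big : (2 : ℝ) ^ (p - 3 + max 0 N) * (2 : ℝ) ^ emin ≤ C₁)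
    (hN : IsFPN emin p ((2 : ℝ) ^ (-N)))
    (hxR : |x * R| ≤ (2 : ℝ) ^ (p - N - 2))
    (hz₀ : RN emin p (3 * (2 : ℝ) ^ (p - N - 2) + x * R) z₀)
    (hz : RN emin p (z₀ - 3 * (2 : ℝ) ^ (p - N - 2)) z) :
    IsFPN emin p (x - z * C₁) := by
  obtain ⟨ℓ, rfl, hℓ, hxz⟩ := hz₀.exists_int_of_shift (by omega) hN.le_of_zpow hxR hz
  obtain ⟨e, hC₁grid, hC₁low, hC₁high⟩ :=
    hC₁.1.exists_binade (lt_of_lt_of_le (by positivity) hC₁big)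
  have he : emin + max 0 N ≤ e := by
    rw [← zpow_add₀ two_ne_zero] at hC₁big
    have := (zpow_lt_zpow_iff_right₀ one_lt_two).1 (hC₁big.trans_lt hC₁high)
    omega
  have hC₁pos : 0 < C₁ := lt_of_lt_of_le (by positivity) hC₁low
  have hC₁err : |1 / R - C₁| ≤ (2 : ℝ) ^ e / 2 :=
    RN.abs_sub_le_half_zpow_of_abs_lt hC₁ (by omega) (by omega) (by rwa [abs_of_pos hC₁pos])
  have hC₁low' : (2 : ℝ) ^ (p - 3 + e) < C₁ :=
    lt_of_le_of_ne (by rwa [show p - 3 + e = p - 2 - 1 + e by ring]) (hC₁pow _).symm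
  have hu : (0 : ℝ) < 2 ^ (-N) := by positivity
  have hscale (n : ℤ) : (2 : ℝ) ^ (n + (-N + e)) = 2 ^ (-N) * 2 ^ (n + e) := by
    rw [add_left_comm, zpow_add₀ two_ne_zero]
  rw [mul_assoc]
  refine hx.sub_mul_of_close (t := 2 ^ (-N) * (1 / R)) (by omega) (by omega)
    (zpow_mul_mem_dyadicGrid hC₁grid _) ?_ ?_ ?_ hℓ ?_
  · rw [hscale]; gcongr
  · rw [hscale]; gcongr
  · rw [← mul_sub, abs_mul, abs_of_pos hu, zpow_add₀ two_ne_zero, mul_div_assoc]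
    gcongr
  · rw [show x - ℓ * (2 ^ (-N) * (1 / R)) = (x * R - ℓ * 2 ^ (-N)) / R by field_simp,
      abs_div, abs_of_pos hRpos, mul_one_div, div_right_comm]
    gcongr

/-- First reduction step with computed `z` is exact (Fmac_arg_reduct_correct3). -/
theorem Fmac_arg_reduct_correct3 (p emin N : ℤ) (hp : 3 < p)
    (x R C₁ z₀ z : ℝ)
    (hx : IsFPN emin p x)
    (hRpos : 0 < R) (hRnorm : IsNormalFPN emin p R)
    (hC₁ : RN emin (p - 2) (1 / R) C₁)
    (hC₁pow : ∀ j : ℤ, C₁ ≠ (2 : ℝ) ^ j)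
    (hC₁big : (2 : ℝ) ^ (p + max (-1) N) * (2 : ℝ) ^ emin ≤ C₁)
    (hN : IsFPN emin p ((2 : ℝ) ^ (-N)))
    (hxR : |x * R| ≤ (2 : ℝ) ^ (p - N - 2) - (2 : ℝ) ^ (-N))
    (hz₀ : RN emin p (3 * (2 : ℝ) ^ (p - N - 2) + x * R) z₀)
    (hz : RN emin p (z₀ - 3 * (2 : ℝ) ^ (p - N - 2)) z) :
    IsFPN emin p (x - z * C₁) := by
  have hC₁norm : (2 : ℝ) ^ (p - 3 + max 0 N) ≤ 2 ^ (p + max (-1) N) :=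
    zpow_le_zpow_right₀ one_le_two (by omega)
  exact Fmac_arg_reduct_correct3_general p emin N hp x R C₁ z₀ z hx hRpos hC₁ hC₁pow
    ((mul_le_mul_of_nonneg_right hC₁norm (by positivity)).trans hC₁big) hN
    (hxR.trans (sub_le_self _ (by positivity))) hz₀ hz
end
end

section
/- Accuracy of the truncated constant (gamma2_le): Assume p > 3, C is a positive real constant, R is a round-to-nearest of 1/C to p bits, R is a positive normal p-bit FPN, C₁ is a round-to-nearest of 1/R to p − 2 bits, C₁ is not exactly a power of 2 (C₁ ≠ 2^j for every integer j), and C₁ ≥ 2^(p−1)·λ. Then |C − C₁| ≤ 4·ulp(C₁). -/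
noncomputable section

/-!
Rounding to nearest is monotone with respect to the representable numbers, and for a result `r` in
the normal range both `r - ulp r` and `r + ulp r` are representable, so rounding has absolute error
at most `ulp r / 2` and hence relative error at most `2 ^ (-p)`. The relative error of `R` passes to
its reciprocal: with `2 ^ G ≤ 1 / R < 2 ^ (G + 1)`, monotonicity gives `C < 2 ^ (G + 1)`, so that
`|C - 1 / R| = C * |1 / C - R| / R < 2 ^ (G + 1 - p) = ulp (1 / R)`. Again by monotonicity
`1 / R` does not lie in a higher binade than `C₁`, and the half-ulp error of the second rounding
is added by the triangle inequality.
-/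

section Binade

variable {x : ℝ}

theorem abs_mul_two_zpow (x : ℝ) (e : ℤ) : |x * 2 ^ e| = |x| * 2 ^ e := by
  rw [abs_mul, abs_zpow, abs_two]

theorem two_zpow_log_abs_le (hx : x ≠ 0) : (2 : ℝ) ^ Int.log 2 |x| ≤ |x| :=
  mod_cast Int.zpow_log_le_self one_lt_two (abs_pos.2 hx)

theorem abs_lt_two_zpow_log_add_one (x : ℝ) : |x| < (2 : ℝ) ^ (Int.log 2 |x| + 1) :=
  mod_cast Int.lt_zpow_succ_log_self one_lt_two |x|

theorem ulp_pos (p : ℤ) (x : ℝ) : 0 < ulp p x :=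
  zpow_pos two_pos _

theorem ulp_sub (p j : ℤ) (x : ℝ) : ulp (p - j) x = 2 ^ j * ulp p x := by
  rw [ulp, ulp, ← zpow_add₀ two_ne_zero]
  congr 1
  ring

theorem two_zpow_mul_ulp (p : ℤ) (x : ℝ) : 2 ^ p * ulp p x = 2 ^ (Int.log 2 |x| + 1) := by
  rw [ulp, ← zpow_add₀ two_ne_zero]
  congr 1
  ring

theorem ulp_div_two_le (p : ℤ) (hx : x ≠ 0) : ulp p x / 2 ≤ 2 ^ (-p) * |x| :=
  calc ulp p x / 2 = 2 ^ (-p) * 2 ^ Int.log 2 |x| := by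
        rw [ulp, div_eq_mul_inv, ← zpow_sub_one₀ two_ne_zero, ← zpow_add₀ two_ne_zero]
        congr 1
        ring
    _ ≤ 2 ^ (-p) * |x| := by
        gcongr
        exact two_zpow_log_abs_le hx

end Binade

section Representable

variable {emin k : ℤ} {x : ℝ}

theorem isFPN_zero (emin k : ℤ) : IsFPN emin k 0 :=
  ⟨0, emin, by simpa using zpow_pos two_pos k, le_rfl, by simp⟩

/-- The bound on the significand is not strict: `±2 ^ k * 2 ^ e` is represented by `±1`, with
exponent `k + e`. -/
theorem isFPN_int_mul_two_zpow {n e : ℤ} (hk : 1 ≤ k) (he : emin ≤ e)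
    (hn : |(n : ℝ)| ≤ 2 ^ k) : IsFPN emin k (n * 2 ^ e) := by
  rcases hn.lt_or_eq with hlt | heq
  · exact ⟨n, e, hlt, he, rfl⟩
  · have hone : (1 : ℝ) < 2 ^ k := one_lt_zpow₀ one_lt_two (by omega)
    have hsign : |(n.sign : ℝ)| ≤ 1 := by
      rcases Int.sign_trichotomy n with h | h | h <;> simp [h]
    refine ⟨n.sign, k + e, hsign.trans_lt hone, by omega, ?_⟩
    rw [zpow_add₀ two_ne_zero, ← heq, ← mul_assoc]
    congr 1
    exact_mod_cast (Int.sign_mul_abs n).symm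

theorem isFPN_two_zpow {e : ℤ} (hk : 1 ≤ k) (he : emin ≤ e) : IsFPN emin k (2 ^ e) := by
  have hone : |((1 : ℤ) : ℝ)| ≤ 2 ^ k := by
    simpa using one_le_zpow₀ (one_le_two (α := ℝ)) (by omega : 0 ≤ k)
  simpa using isFPN_int_mul_two_zpow hk he hone

theorem IsFPN.one_le_precision (h : IsFPN emin k x) (hx : x ≠ 0) : 1 ≤ k := by
  obtain ⟨m, e, hm, -, rfl⟩ := h
  have hm0 : m ≠ 0 := Int.cast_ne_zero.1 (left_ne_zero_of_mul hx)
  have hone : (1 : ℝ) ≤ |(m : ℝ)| := mod_cast Int.one_le_abs hm0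
  have : (2 : ℝ) ^ (0 : ℤ) < 2 ^ k := by simpa using hone.trans_lt hm
  exact (zpow_lt_zpow_iff_right₀ one_lt_two).1 this

theorem IsFPN.two_zpow_emin_le_abs (h : IsFPN emin k x) (hx : x ≠ 0) : 2 ^ emin ≤ |x| := by
  obtain ⟨m, e, -, he, rfl⟩ := h
  have hm0 : m ≠ 0 := Int.cast_ne_zero.1 (left_ne_zero_of_mul hx)
  have hone : (1 : ℝ) ≤ |(m : ℝ)| := mod_cast Int.one_le_abs hm0
  calc (2 : ℝ) ^ emin ≤ 2 ^ e := zpow_le_zpow_right₀ one_le_two he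
    _ ≤ |(m : ℝ)| * 2 ^ e := le_mul_of_one_le_left (by positivity) hone
    _ = |(m : ℝ) * 2 ^ e| := (abs_mul_two_zpow _ e).symm

theorem IsNormalFPN.le_abs (h : IsNormalFPN emin k x) : 2 ^ (k - 1) * 2 ^ emin ≤ |x| := by
  obtain ⟨m, e, hm, -, he, rfl⟩ := h
  rw [abs_mul_two_zpow]
  gcongr
  exact one_le_two

theorem IsFPN.exists_eq_int_mul_ulp (h : IsFPN emin k x) (hx : x ≠ 0) :
    ∃ n : ℤ, |(n : ℝ)| < 2 ^ k ∧ x = n * ulp k x := by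
  obtain ⟨n, hn⟩ : ∃ n : ℤ, x = n * ulp k x := by
    obtain ⟨m, e, hm, -, hme⟩ := h
    have hlt : (2 : ℝ) ^ Int.log 2 |x| < 2 ^ (k + e) :=
      calc (2 : ℝ) ^ Int.log 2 |x| ≤ |x| := two_zpow_log_abs_le hx
        _ = |(m : ℝ)| * 2 ^ e := by rw [hme, abs_mul_two_zpow]
        _ < 2 ^ (k + e) := by
            rw [zpow_add₀ two_ne_zero]
            gcongr
    have hlog : Int.log 2 |x| < k + e := (zpow_lt_zpow_iff_right₀ one_lt_two).1 hlt
    refine ⟨m * 2 ^ (e - (Int.log 2 |x| - k + 1)).toNat, ?_⟩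
    rw [ulp]
    push_cast
    rw [← zpow_natCast, Int.toNat_of_nonneg (by omega), mul_assoc, ← zpow_add₀ two_ne_zero,
      sub_add_cancel, ← hme]
  refine ⟨n, lt_of_mul_lt_mul_right ?_ (ulp_pos k x).le, hn⟩
  calc |(n : ℝ)| * ulp k x = |x| := by
        conv_rhs => rw [hn, abs_mul, abs_of_pos (ulp_pos k x)]
    _ < 2 ^ (Int.log 2 |x| + 1) := abs_lt_two_zpow_log_add_one x
    _ = 2 ^ k * ulp k x := (two_zpow_mul_ulp k x).symm

theorem IsFPN.add_ulp_and_sub_ulp (h : IsFPN emin k x)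
    (hnormal : 2 ^ (k - 1) * 2 ^ emin ≤ |x|) :
    IsFPN emin k (x + ulp k x) ∧ IsFPN emin k (x - ulp k x) := by
  have hx : x ≠ 0 := abs_pos.1 (lt_of_lt_of_le (by positivity) hnormal)
  have hk : 1 ≤ k := h.one_le_precision hx
  have hexp : emin ≤ Int.log 2 |x| - k + 1 := by
    rw [← zpow_add₀ two_ne_zero] at hnormal
    have := (zpow_lt_zpow_iff_right₀ one_lt_two).1
      (hnormal.trans_lt (abs_lt_two_zpow_log_add_one x))
    omega
  obtain ⟨n, hn, hxn⟩ := h.exists_eq_int_mul_ulp hx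
  obtain ⟨q, hq⟩ : ∃ q : ℤ, (2 : ℝ) ^ k = q :=
    ⟨2 ^ k.toNat, by
      push_cast
      rw [← zpow_natCast, Int.toNat_of_nonneg (by omega)]⟩
  have hnq : |n| < q := by
    rw [hq] at hn
    exact_mod_cast hn
  have hadd : |((n + 1 : ℤ) : ℝ)| ≤ 2 ^ k := by
    rw [hq]
    exact_mod_cast (show |n + 1| ≤ q by grind)
  have hsub : |((n - 1 : ℤ) : ℝ)| ≤ 2 ^ k := by
    rw [hq]
    exact_mod_cast (show |n - 1| ≤ q by grind)
  have hx_add : x + ulp k x = (n + 1 : ℤ) * ulp k x := by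
    push_cast
    linarith
  have hx_sub : x - ulp k x = (n - 1 : ℤ) * ulp k x := by
    push_cast
    linarith
  rw [hx_add, hx_sub]
  exact ⟨isFPN_int_mul_two_zpow hk hexp hadd, isFPN_int_mul_two_zpow hk hexp hsub⟩

end Representable

namespace RN

variable {emin k : ℤ} {a r : ℝ}

theorem lt_of_lt_isFPN {y : ℝ} (h : RN emin k a r) (hy : IsFPN emin k y) (hry : r < y) :
    a < y := by
  by_contra! hya
  have := h.2 y hy
  rw [abs_of_nonneg (by linarith), abs_of_nonneg (by linarith)] at this
  linarith

theorem lt_of_isFPN_lt {y : ℝ} (h : RN emin k a r) (hy : IsFPN emin k y) (hyr : y < r) :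
    y < a := by
  by_contra! hay
  have := h.2 y hy
  rw [abs_of_nonpos (by linarith), abs_of_nonpos (by linarith)] at this
  linarith

theorem ulp_le (h : RN emin k a r) (hr : 0 < r) (p : ℤ) : ulp p a ≤ ulp p r := by
  have ha : 0 < a := h.lt_of_isFPN_lt (isFPN_zero emin k) hr
  have hr_lt : r < 2 ^ (Int.log 2 |r| + 1) :=
    (le_abs_self r).trans_lt (abs_lt_two_zpow_log_add_one r)
  have hexp : emin < Int.log 2 |r| + 1 := (zpow_lt_zpow_iff_right₀ one_lt_two).1
    ((h.1.two_zpow_emin_le_abs hr.ne').trans_lt (abs_lt_two_zpow_log_add_one r))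
  have ha_lt : a < 2 ^ (Int.log 2 |r| + 1) :=
    h.lt_of_lt_isFPN (isFPN_two_zpow (h.1.one_le_precision hr.ne') hexp.le) hr_lt
  have hlog : Int.log 2 |a| < Int.log 2 |r| + 1 := by
    refine (zpow_lt_zpow_iff_right₀ (one_lt_two (α := ℝ))).1 ?_
    exact (two_zpow_log_abs_le ha.ne').trans_lt (by rwa [abs_of_pos ha])
  exact zpow_le_zpow_right₀ one_le_two (by omega)

theorem abs_sub_le_ulp_div_two (h : RN emin k a r)
    (hnormal : 2 ^ (k - 1) * 2 ^ emin ≤ |r|) : |a - r| ≤ ulp k r / 2 := by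
  obtain ⟨hadd, hsub⟩ := h.1.add_ulp_and_sub_ulp hnormal
  have hle_add := h.2 _ hadd
  have hle_sub := h.2 _ hsub
  have hulp := ulp_pos k r
  grind

theorem abs_sub_le_two_zpow_neg_mul (h : RN emin k a r)
    (hnormal : 2 ^ (k - 1) * 2 ^ emin ≤ |r|) : |a - r| ≤ 2 ^ (-k) * |r| :=
  (h.abs_sub_le_ulp_div_two hnormal).trans <|
    ulp_div_two_le k (abs_pos.1 (lt_of_lt_of_le (by positivity) hnormal))

theorem inv_lt_two_zpow_log_inv_add_one (h : RN emin k a r) (hk : 1 < k)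
    (hnormal : 2 ^ (k - 1) * 2 ^ emin ≤ r) : a⁻¹ < 2 ^ (Int.log 2 |r⁻¹| + 1) := by
  have hr : 0 < r := lt_of_lt_of_le (by positivity) hnormal
  have hinv_lt := abs_lt_two_zpow_log_add_one r⁻¹
  have hle_inv := two_zpow_log_abs_le (inv_ne_zero hr.ne')
  set G := Int.log 2 |r⁻¹|
  rw [abs_of_pos (inv_pos.2 hr)] at hinv_lt hle_inv
  have hlt_r : (2 : ℝ) ^ (-(G + 1)) < r := by
    rw [zpow_neg]
    exact inv_lt_of_inv_lt₀ hr hinv_lt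
  have hr_le : r ≤ 2 ^ (-G) := by
    rw [zpow_neg]
    exact (le_inv_comm₀ (by positivity) hr).1 hle_inv
  have hexp : k - 1 + emin ≤ -G := by
    rw [← zpow_add₀ two_ne_zero] at hnormal
    exact (zpow_le_zpow_iff_right₀ one_lt_two).1 (hnormal.trans hr_le)
  have hlt_a : (2 : ℝ) ^ (-(G + 1)) < a :=
    h.lt_of_isFPN_lt (isFPN_two_zpow hk.le (by omega)) hlt_r
  rw [zpow_neg] at hlt_a
  exact (inv_lt_comm₀ (by positivity) (h.lt_of_isFPN_lt (isFPN_zero emin k) hr)).1 hlt_a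

theorem abs_inv_sub_inv_le_ulp (h : RN emin k a r) (hk : 1 < k)
    (hnormal : 2 ^ (k - 1) * 2 ^ emin ≤ r) : |a⁻¹ - r⁻¹| ≤ ulp k r⁻¹ := by
  have hr : 0 < r := lt_of_lt_of_le (by positivity) hnormal
  have ha : 0 < a := h.lt_of_isFPN_lt (isFPN_zero emin k) hr
  have hrel : |a - r| / r ≤ 2 ^ (-k) := by
    rw [div_le_iff₀ hr]
    simpa only [abs_of_pos hr] using
      h.abs_sub_le_two_zpow_neg_mul (hnormal.trans (le_abs_self r))
  have ha_inv := h.inv_lt_two_zpow_log_inv_add_one hk hnormal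
  calc |a⁻¹ - r⁻¹| = a⁻¹ * (|a - r| / r) := by
        rw [inv_sub_inv ha.ne' hr.ne', abs_div, abs_of_pos (mul_pos ha hr), abs_sub_comm]
        field_simp
    _ ≤ 2 ^ (Int.log 2 |r⁻¹| + 1) * 2 ^ (-k) := by gcongr
    _ = ulp k r⁻¹ := by
        rw [ulp, ← zpow_add₀ two_ne_zero]
        congr 1
        ring

end RN

theorem gamma2_le_general {p k emin : ℤ} (hp : 1 < p) {C R C₁ : ℝ}
    (hR : RN emin p (1 / C) R) (hRnormal : 2 ^ (p - 1) * 2 ^ emin ≤ R)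
    (hC₁ : RN emin k (1 / R) C₁) (hC₁normal : 2 ^ (k - 1) * 2 ^ emin ≤ C₁) :
    |C - C₁| ≤ ulp p C₁ + ulp k C₁ / 2 := by
  have hC₁pos : 0 < C₁ := lt_of_lt_of_le (by positivity) hC₁normal
  have hinv : |C - 1 / R| ≤ ulp p (1 / R) := by
    simpa only [one_div, inv_inv] using hR.abs_inv_sub_inv_le_ulp hp hRnormal
  calc |C - C₁| ≤ |C - 1 / R| + |1 / R - C₁| := abs_sub_le _ _ _
    _ ≤ ulp p C₁ + ulp k C₁ / 2 := add_le_add (hinv.trans (hC₁.ulp_le hC₁pos p))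
        (hC₁.abs_sub_le_ulp_div_two (hC₁normal.trans (le_abs_self C₁)))

/-- Accuracy of the truncated constant (gamma2_le). -/
theorem gamma2_le (p emin : ℤ) (hp : 3 < p)
    (C R C₁ : ℝ) (hC : 0 < C)
    (hR : RN emin p (1 / C) R)
    (hRpos : 0 < R) (hRnorm : IsNormalFPN emin p R)
    (hC₁ : RN emin (p - 2) (1 / R) C₁)
    (hC₁pow : ∀ j : ℤ, C₁ ≠ (2 : ℝ) ^ j)
    (hC₁big : (2 : ℝ) ^ (p - 1) * (2 : ℝ) ^ emin ≤ C₁) :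
    |C - C₁| ≤ 4 * ulp p C₁ := by
  have hC₁normal : (2 : ℝ) ^ (p - 2 - 1) * 2 ^ emin ≤ C₁ := by
    refine le_trans ?_ hC₁big
    gcongr <;> norm_num
  have h := gamma2_le_general (by omega) hR (abs_of_pos hRpos ▸ hRnorm.le_abs) hC₁ hC₁normal
  rw [ulp_sub] at h
  linarith [ulp_pos p C₁]
end
end
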